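/- There exists a constant C > 0 such that for every Schwartz function u : ℝ³ → ℝ one has ‖u‖_{L^∞(ℝ³)} ≤ C·‖∇u‖_{L²(ℝ³)}^{1/2}·‖∇²u‖_{L²(ℝ³)}^{1/2}, where ∇²u denotes the second iterated (Fréchet) derivative of u. -/

import Mathlib

open MeasureTheory

/-- Three-dimensional Euclidean space. -/
noncomputable abbrev E3 : Type := EuclideanSpace ℝ (Fin 3)

/-- The `L²` norm on `ℝ³`. -/
noncomputable def L2norm {F : Type*} [NormedAddCommGroup F] (f : E3 → F) : ℝ :=
  (∫ x : E3, ‖f x‖ ^ 2) ^ ((1:ℝ)/2)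

open Module Set Filter Topology
open scoped FourierTransform SchwartzMap LineDeriv

/-!
By Fourier inversion `‖u‖_∞ ≤ ‖û‖_{L¹}`. Carlson's inequality bounds `‖û‖_{L¹}` by the moments
`∫ ‖ξ‖ ^ (2 * j) * ‖û‖ ^ 2` and `∫ ‖ξ‖ ^ (2 * k) * ‖û‖ ^ 2` whenever `j < d / 2 < k`: apply
Cauchy-Schwarz with the weight `‖ξ‖ ^ (2 * j) + ‖ξ‖ ^ (2 * k)`, whose inverse is integrable exactly
in this range, then dilate and optimise over the scale. By Plancherel's theorem the moments are
controlled by the `L²` norms of the `j`-th and `k`-th derivatives. Composing with norming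
functionals reduces an arbitrary codomain to complex-valued functions.
-/

section CarlsonInequality

theorem sq_integral_sqrt_mul_sqrt_le {α : Type*} [MeasurableSpace α] {μ : Measure α} {u v : α → ℝ}
    (hu : Integrable u μ) (hv : Integrable v μ) (hu_nonneg : 0 ≤ᵐ[μ] u) (hv_nonneg : 0 ≤ᵐ[μ] v) :
    (∫ x, √(u x) * √(v x) ∂μ) ^ 2 ≤ (∫ x, u x ∂μ) * ∫ x, v x ∂μ := by
  have sq_sqrt {g : α → ℝ} (hg : 0 ≤ᵐ[μ] g) : (fun x => √(g x) ^ 2) =ᵐ[μ] g :=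
    hg.mono fun x hx => Real.sq_sqrt hx
  have memLp_sqrt {g : α → ℝ} (hg : Integrable g μ) (hg_nonneg : 0 ≤ᵐ[μ] g) :
      MemLp (fun x => √(g x)) (ENNReal.ofReal 2) μ := by
    rw [ENNReal.ofReal_ofNat, memLp_two_iff_integrable_sq
      (Real.continuous_sqrt.comp_aestronglyMeasurable hg.aestronglyMeasurable)]
    exact hg.congr (sq_sqrt hg_nonneg).symm
  have cauchy_schwarz := integral_mul_le_Lp_mul_Lq_of_nonneg .two_two
    (.of_forall fun x => Real.sqrt_nonneg (u x)) (.of_forall fun x => Real.sqrt_nonneg (v x))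
    (memLp_sqrt hu hu_nonneg) (memLp_sqrt hv hv_nonneg)
  simp only [Real.rpow_two, ← Real.sqrt_eq_rpow, integral_congr_ae (sq_sqrt hu_nonneg),
    integral_congr_ae (sq_sqrt hv_nonneg)] at cauchy_schwarz
  rwa [← Real.sqrt_mul (integral_nonneg_of_ae hu_nonneg), Real.le_sqrt
    (integral_nonneg fun x => by positivity) (mul_nonneg (integral_nonneg_of_ae hu_nonneg)
    (integral_nonneg_of_ae hv_nonneg))] at cauchy_schwarz

theorem sq_integral_norm_le_integral_inv_mul_integral_mul {α G : Type*} [MeasurableSpace α]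
    {μ : Measure α} [NormedAddCommGroup G] {w : α → ℝ} {f : α → G} (hw : ∀ᵐ x ∂μ, 0 < w x)
    (hw_inv : Integrable (fun x => (w x)⁻¹) μ) (hwf : Integrable (fun x => w x * ‖f x‖ ^ 2) μ) :
    (∫ x, ‖f x‖ ∂μ) ^ 2 ≤ (∫ x, (w x)⁻¹ ∂μ) * ∫ x, w x * ‖f x‖ ^ 2 ∂μ := by
  have norm_eq : ∀ᵐ x ∂μ, ‖f x‖ = √(w x)⁻¹ * √(w x * ‖f x‖ ^ 2) := by
    filter_upwards [hw] with x hx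
    rw [← Real.sqrt_mul (by positivity), inv_mul_cancel_left₀ hx.ne', Real.sqrt_sq (norm_nonneg _)]
  rw [integral_congr_ae norm_eq]
  exact sq_integral_sqrt_mul_sqrt_le hw_inv hwf (hw.mono fun x hx => (inv_pos.2 hx).le)
    (hw.mono fun x hx => by positivity)

theorem mem_Ioo_of_one_sub_mul_add_mul_eq {a b c θ : ℝ} (hac : a < c) (hcb : c < b)
    (hθ : (1 - θ) * a + θ * b = c) : θ ∈ Ioo 0 1 :=
  ⟨by nlinarith, by nlinarith⟩

theorem exists_pos_rpow_mul_add_rpow_neg_mul_eq {A B p q θ : ℝ} (hA : 0 < A) (hB : 0 < B)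
    (hpq : p + q ≠ 0) (hθ : θ * (p + q) = p) :
    ∃ r > 0, r ^ p * A + r ^ (-q) * B = 2 * (A ^ (1 - θ) * B ^ θ) := by
  -- At this scale the two summands agree.
  refine ⟨(B / A) ^ (1 / (p + q)), by positivity, ?_⟩
  have hp : 1 / (p + q) * p = θ := by field_simp; linarith
  have hq : 1 / (p + q) * -q = θ - 1 := by field_simp; linarith
  rw [← Real.rpow_mul (by positivity), ← Real.rpow_mul (by positivity), hp, hq,
    Real.rpow_sub_one (by positivity), Real.rpow_sub hA, Real.rpow_one, Real.div_rpow hB.le hA.le]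
  field_simp
  ring

theorem le_mul_rpow_mul_rpow_of_forall_pos {A B K X p q θ : ℝ} (hA : 0 ≤ A) (hB : 0 ≤ B)
    (hK : 0 ≤ K) (hp : 0 < p) (hq : 0 < q) (hθ : θ * (p + q) = p)
    (h : ∀ r > 0, X ≤ K * (r ^ p * A + r ^ (-q) * B)) :
    X ≤ 2 * K * (A ^ (1 - θ) * B ^ θ) := by
  obtain ⟨θ_pos, θ_lt_one⟩ : θ ∈ Ioo 0 1 :=
    mem_Ioo_of_one_sub_mul_add_mul_eq hp (lt_add_of_pos_right p hq) (by linarith)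
  have perturbed : ∀ ε > 0, X ≤ 2 * K * ((A + ε) ^ (1 - θ) * (B + ε) ^ θ) := by
    intro ε hε
    obtain ⟨r, hr, hr_eq⟩ := exists_pos_rpow_mul_add_rpow_neg_mul_eq
      (add_pos_of_nonneg_of_pos hA hε) (add_pos_of_nonneg_of_pos hB hε) (by positivity) hθ
    calc X ≤ K * (r ^ p * A + r ^ (-q) * B) := h r hr
      _ ≤ K * (r ^ p * (A + ε) + r ^ (-q) * (B + ε)) := by gcongr <;> linarith
      _ = 2 * K * ((A + ε) ^ (1 - θ) * (B + ε) ^ θ) := by rw [hr_eq]; ring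
  have bound_continuous : Continuous fun ε => 2 * K * ((A + ε) ^ (1 - θ) * (B + ε) ^ θ) :=
    continuous_const.mul (((continuous_const.add continuous_id).rpow_const fun _ =>
      .inr (sub_nonneg.2 θ_lt_one.le)).mul ((continuous_const.add continuous_id).rpow_const fun _ =>
      .inr θ_pos.le))
  have tendsto_bound : Tendsto (fun ε => 2 * K * ((A + ε) ^ (1 - θ) * (B + ε) ^ θ)) (𝓝[>] 0)
      (𝓝 (2 * K * (A ^ (1 - θ) * B ^ θ))) := by
    simpa using (bound_continuous.tendsto 0).mono_left nhdsWithin_le_nhds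
  exact ge_of_tendsto tendsto_bound (eventually_mem_nhdsWithin.mono perturbed)

theorem integrableOn_Ioi_rpow_mul_inv_rpow_add_rpow {a b c : ℝ} (ha : a < c + 1) (hb : c + 1 < b) :
    IntegrableOn (fun y : ℝ => y ^ c * (y ^ a + y ^ b)⁻¹) (Ioi 0) := by
  have integrable_near_zero : IntegrableOn (fun y : ℝ => y ^ (c - a)) (Ioc 0 1) :=
    (intervalIntegrable_iff_integrableOn_Ioc_of_le zero_le_one).1
      (intervalIntegral.intervalIntegrable_rpow' (by linarith))
  have integrable_near_infty : IntegrableOn (fun y : ℝ => y ^ (c - b)) (Ioi 1) :=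
    integrableOn_Ioi_rpow_of_lt (by linarith) one_pos
  have norm_le {y e : ℝ} (hy : 0 < y) (he : y ^ e ≤ y ^ a + y ^ b) :
      ‖y ^ c * (y ^ a + y ^ b)⁻¹‖ ≤ y ^ (c - e) := by
    rw [Real.norm_of_nonneg (by positivity), Real.rpow_sub hy, div_eq_mul_inv]
    gcongr
  have measurable_integrand : Measurable fun y : ℝ => y ^ c * (y ^ a + y ^ b)⁻¹ := by fun_prop
  rw [← Ioc_union_Ioi_eq_Ioi zero_le_one]
  refine IntegrableOn.union (integrable_near_zero.mono' measurable_integrand.aestronglyMeasurable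
    (ae_restrict_of_forall_mem measurableSet_Ioc fun y hy => ?_))
    (integrable_near_infty.mono' measurable_integrand.aestronglyMeasurable
      (ae_restrict_of_forall_mem measurableSet_Ioi fun y hy => ?_))
  · exact norm_le hy.1 (le_add_of_nonneg_right (Real.rpow_nonneg hy.1.le b))
  · have hy_pos : 0 < y := one_pos.trans hy
    exact norm_le hy_pos (le_add_of_nonneg_left (Real.rpow_nonneg hy_pos.le a))

variable {E : Type*} [NormedAddCommGroup E] [NormedSpace ℝ E] [FiniteDimensional ℝ E]
  [Nontrivial E] [MeasurableSpace E] [BorelSpace E] {μ : Measure E} [μ.IsAddHaarMeasure] {a b : ℝ}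

theorem integrable_inv_norm_rpow_add_norm_rpow (ha : a < finrank ℝ E) (hb : finrank ℝ E < b) :
    Integrable (fun x : E => (‖x‖ ^ a + ‖x‖ ^ b)⁻¹) μ := by
  have finrank_sub_one : ((finrank ℝ E - 1 : ℕ) : ℝ) + 1 = finrank ℝ E :=
    mod_cast Nat.sub_add_cancel finrank_pos
  rw [integrable_fun_norm_addHaar μ (f := fun y : ℝ => (y ^ a + y ^ b)⁻¹)]
  simp only [smul_eq_mul, ← Real.rpow_natCast]
  exact integrableOn_Ioi_rpow_mul_inv_rpow_add_rpow (by rwa [finrank_sub_one])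
    (by rwa [finrank_sub_one])

variable {G : Type*} [NormedAddCommGroup G] {f : E → G}

theorem sq_integral_norm_le_of_dilation (ha : a < finrank ℝ E) (hb : finrank ℝ E < b)
    (hfa : Integrable (fun x => ‖x‖ ^ a * ‖f x‖ ^ 2) μ)
    (hfb : Integrable (fun x => ‖x‖ ^ b * ‖f x‖ ^ 2) μ) {r : ℝ} (hr : 0 < r) :
    (∫ x, ‖f x‖ ∂μ) ^ 2 ≤ (∫ x, (‖x‖ ^ a + ‖x‖ ^ b)⁻¹ ∂μ) *
      (r ^ (finrank ℝ E - a) * ∫ x, ‖x‖ ^ a * ‖f x‖ ^ 2 ∂μ +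
        r ^ (-(b - finrank ℝ E)) * ∫ x, ‖x‖ ^ b * ‖f x‖ ^ 2 ∂μ) := by
  let w : E → ℝ := fun x => ‖r⁻¹ • x‖ ^ a + ‖r⁻¹ • x‖ ^ b
  have w_pos : ∀ᵐ x ∂μ, 0 < w x := by
    filter_upwards [Measure.ae_ne μ 0] with x hx
    have : 0 < ‖r⁻¹ • x‖ := norm_pos_iff.2 (smul_ne_zero (inv_ne_zero hr.ne') hx)
    positivity
  have integrable_inv_w : Integrable (fun x => (w x)⁻¹) μ :=
    (integrable_inv_norm_rpow_add_norm_rpow ha hb).comp_smul (inv_ne_zero hr.ne')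
  have integral_inv_w :
      ∫ x, (w x)⁻¹ ∂μ = r ^ finrank ℝ E * ∫ x, (‖x‖ ^ a + ‖x‖ ^ b)⁻¹ ∂μ :=
    Measure.integral_comp_inv_smul_of_nonneg μ (fun x => (‖x‖ ^ a + ‖x‖ ^ b)⁻¹) hr.le
  have w_mul : ∀ x, w x * ‖f x‖ ^ 2 =
      r ^ (-a) * (‖x‖ ^ a * ‖f x‖ ^ 2) + r ^ (-b) * (‖x‖ ^ b * ‖f x‖ ^ 2) := by
    intro x
    simp only [w, norm_smul, norm_inv, Real.norm_of_nonneg hr.le,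
      Real.mul_rpow (inv_nonneg.2 hr.le) (norm_nonneg x), Real.inv_rpow hr.le, Real.rpow_neg hr.le]
    ring
  have integrable_w_mul : Integrable (fun x => w x * ‖f x‖ ^ 2) μ := by
    simp only [w_mul]
    exact (hfa.const_mul _).add (hfb.const_mul _)
  calc (∫ x, ‖f x‖ ∂μ) ^ 2 ≤ (∫ x, (w x)⁻¹ ∂μ) * ∫ x, w x * ‖f x‖ ^ 2 ∂μ :=
        sq_integral_norm_le_integral_inv_mul_integral_mul w_pos integrable_inv_w integrable_w_mul
    _ = _ := by
      simp only [integral_inv_w, w_mul]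
      rw [integral_add (hfa.const_mul _) (hfb.const_mul _), integral_const_mul, integral_const_mul,
        neg_sub, sub_eq_add_neg, sub_eq_add_neg, Real.rpow_add hr, Real.rpow_add hr,
        Real.rpow_natCast]
      ring

theorem carlson_inequality (ha : a < finrank ℝ E) (hb : finrank ℝ E < b)
    (hfa : Integrable (fun x => ‖x‖ ^ a * ‖f x‖ ^ 2) μ)
    (hfb : Integrable (fun x => ‖x‖ ^ b * ‖f x‖ ^ 2) μ)
    {θ : ℝ} (hθ : (1 - θ) * a + θ * b = finrank ℝ E) :
    ∫ x, ‖f x‖ ∂μ ≤ √(2 * ∫ x, (‖x‖ ^ a + ‖x‖ ^ b)⁻¹ ∂μ) *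
      (√(∫ x, ‖x‖ ^ a * ‖f x‖ ^ 2 ∂μ) ^ (1 - θ) * √(∫ x, ‖x‖ ^ b * ‖f x‖ ^ 2 ∂μ) ^ θ) := by
  have A_nonneg : 0 ≤ ∫ x, ‖x‖ ^ a * ‖f x‖ ^ 2 ∂μ := integral_nonneg fun x => by positivity
  have B_nonneg : 0 ≤ ∫ x, ‖x‖ ^ b * ‖f x‖ ^ 2 ∂μ := integral_nonneg fun x => by positivity
  have K_nonneg : 0 ≤ ∫ x, (‖x‖ ^ a + ‖x‖ ^ b)⁻¹ ∂μ := integral_nonneg fun x => by positivity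
  have sq_le := le_mul_rpow_mul_rpow_of_forall_pos A_nonneg B_nonneg K_nonneg (sub_pos.2 ha)
    (sub_pos.2 hb) (θ := θ) (by linarith) fun r hr =>
      sq_integral_norm_le_of_dilation ha hb hfa hfb hr
  refine le_of_sq_le_sq ?_ (by positivity)
  rwa [mul_pow, Real.sq_sqrt (by positivity), mul_pow, Real.rpow_pow_comm (Real.sqrt_nonneg _),
    Real.rpow_pow_comm (Real.sqrt_nonneg _), Real.sq_sqrt A_nonneg, Real.sq_sqrt B_nonneg]

end CarlsonInequality

section Integrability

variable {E F : Type*} [NormedAddCommGroup E] [NormedSpace ℝ E] [SecondCountableTopology E]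
  [MeasurableSpace E] [BorelSpace E] {μ : Measure E} [μ.HasTemperateGrowth]
  [NormedAddCommGroup F] [NormedSpace ℝ F]

theorem integrable_norm_pow_mul_norm_iteratedFDeriv_sq (f : 𝓢(E, F)) (k n : ℕ) :
    Integrable (fun x => ‖x‖ ^ k * ‖iteratedFDeriv ℝ n f x‖ ^ 2) μ := by
  obtain ⟨C, -, hC⟩ := f.decay 0 n
  have bounded : ∀ x, ‖‖iteratedFDeriv ℝ n f x‖‖ ≤ C := by simpa using hC
  have continuous_deriv : Continuous (iteratedFDeriv ℝ n f) :=
    (f.smooth n).continuous_iteratedFDeriv le_rfl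
  simpa only [pow_two, mul_assoc] using (f.integrable_pow_mul_iteratedFDeriv μ k n).mul_bdd
    continuous_deriv.norm.aestronglyMeasurable (.of_forall bounded)

theorem integrable_norm_pow_mul_norm_sq (f : 𝓢(E, F)) (k : ℕ) :
    Integrable (fun x => ‖x‖ ^ k * ‖f x‖ ^ 2) μ := by
  simpa using integrable_norm_pow_mul_norm_iteratedFDeriv_sq f k 0

end Integrability

theorem norm_pow_two_mul_eq_sum_prod_inner_sq {E ι : Type*} [NormedAddCommGroup E]
    [InnerProductSpace ℝ E] [Fintype ι] (b : OrthonormalBasis ι ℝ E) (n : ℕ) (x : E) :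
    ‖x‖ ^ (2 * n) = ∑ m : Fin n → ι, ∏ i, inner ℝ x (b (m i)) ^ 2 := by
  classical
  calc ‖x‖ ^ (2 * n) = (∑ i, inner ℝ x (b i) ^ 2) ^ n := by
        rw [pow_mul, ← b.sum_sq_norm_inner_left]
        simp
    _ = ∑ m : Fin n → ι, ∏ i, inner ℝ x (b (m i)) ^ 2 := by
        rw [← Fin.prod_const, Finset.prod_univ_sum, Fintype.piFinset_univ]

section GagliardoNirenberg

variable {E : Type*} [NormedAddCommGroup E] [InnerProductSpace ℝ E] [FiniteDimensional ℝ E]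
  [MeasurableSpace E] [BorelSpace E]

variable {H : Type*} [NormedAddCommGroup H]

theorem norm_apply_le_integral_norm_fourier [NormedSpace ℂ H] [CompleteSpace H] (f : 𝓢(E, H))
    (x : E) : ‖f x‖ ≤ ∫ ξ, ‖𝓕 f ξ‖ := by
  have fourier_inversion : f x = 𝓕 (𝓕 f) (-x) := by
    rw [SchwartzMap.fourier_coe (𝓕 f), ← Real.fourierInv_eq_fourier_neg,
      ← SchwartzMap.fourierInv_coe, FourierTransform.fourierInv_fourier_eq]
  rw [fourier_inversion, ← SchwartzMap.norm_toLp_one]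
  exact SchwartzMap.norm_fourier_apply_le_toLp_one (𝓕 f) (-x)

theorem norm_fourier_iteratedLineDerivOp [NormedSpace ℂ H] (f : 𝓢(E, H)) {n : ℕ} (m : Fin n → E)
    (ξ : E) : ‖𝓕 (∂^{m} f) ξ‖ = (2 * Real.pi) ^ n * (∏ i, |inner ℝ ξ (m i)|) * ‖𝓕 f ξ‖ := by
  induction n with
  | zero => simp
  | succ n ih =>
    have hm : (inner ℝ · (m 0)).HasTemperateGrowth := by fun_prop
    rw [LineDeriv.iteratedLineDerivOp_succ_left, SchwartzMap.fourier_lineDerivOp_eq]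
    simp only [smul_apply, SchwartzMap.smulLeftCLM_apply_apply hm, norm_smul, norm_mul,
      Complex.norm_ofNat, Complex.norm_real, Complex.norm_I, Real.norm_eq_abs,
      abs_of_pos Real.pi_pos, ih, Fin.prod_univ_succ, Fin.tail]
    ring

theorem sum_norm_fourier_iteratedLineDerivOp_sq [NormedSpace ℂ H] {ι : Type*} [Fintype ι]
    (b : OrthonormalBasis ι ℝ E) (f : 𝓢(E, H)) (n : ℕ) (ξ : E) :
    ∑ m : Fin n → ι, ‖𝓕 (∂^{b ∘ m} f) ξ‖ ^ 2 =
      (2 * Real.pi) ^ (2 * n) * (‖ξ‖ ^ (2 * n) * ‖𝓕 f ξ‖ ^ 2) := by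
  simp only [norm_fourier_iteratedLineDerivOp, Function.comp_apply, mul_pow, ← Finset.prod_pow,
    sq_abs, ← Finset.sum_mul, ← Finset.mul_sum, norm_pow_two_mul_eq_sum_prod_inner_sq b n ξ]
  ring

variable [InnerProductSpace ℂ H] [CompleteSpace H]

theorem integral_norm_fourier_iteratedLineDerivOp_sq_le (f : 𝓢(E, H)) {n : ℕ} {m : Fin n → E}
    (hm : ∀ i, ‖m i‖ = 1) :
    ∫ ξ, ‖𝓕 (∂^{m} f) ξ‖ ^ 2 ≤ ∫ x, ‖iteratedFDeriv ℝ n f x‖ ^ 2 := by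
  rw [SchwartzMap.integral_norm_sq_fourier]
  refine integral_mono (by simpa using integrable_norm_pow_mul_norm_sq (∂^{m} f) 0)
    (by simpa using integrable_norm_pow_mul_norm_iteratedFDeriv_sq f 0 n) fun x => ?_
  have norm_le : ‖(∂^{m} f) x‖ ≤ ‖iteratedFDeriv ℝ n f x‖ := by
    simpa [SchwartzMap.iteratedLineDerivOp_eq_iteratedFDeriv, hm] using
      (iteratedFDeriv ℝ n f x).le_opNorm m
  dsimp only
  gcongr

theorem integral_norm_pow_mul_norm_fourier_sq_le (f : 𝓢(E, H)) (n : ℕ) :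
    (2 * Real.pi) ^ (2 * n) * ∫ ξ, ‖ξ‖ ^ (2 * n) * ‖𝓕 f ξ‖ ^ 2 ≤
      finrank ℝ E ^ n * ∫ x, ‖iteratedFDeriv ℝ n f x‖ ^ 2 := by
  let b := stdOrthonormalBasis ℝ E
  calc (2 * Real.pi) ^ (2 * n) * ∫ ξ, ‖ξ‖ ^ (2 * n) * ‖𝓕 f ξ‖ ^ 2
      = ∑ m : Fin n → Fin (finrank ℝ E), ∫ ξ, ‖𝓕 (∂^{b ∘ m} f) ξ‖ ^ 2 := by
        rw [← integral_const_mul, ← integral_finsetSum _ fun m _ => by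
          simpa using integrable_norm_pow_mul_norm_sq (𝓕 (∂^{b ∘ m} f)) 0]
        simp only [sum_norm_fourier_iteratedLineDerivOp_sq b f n]
    _ ≤ ∑ _m : Fin n → Fin (finrank ℝ E), ∫ x, ‖iteratedFDeriv ℝ n f x‖ ^ 2 :=
        Finset.sum_le_sum fun m _ =>
          integral_norm_fourier_iteratedLineDerivOp_sq_le f fun i => b.norm_eq_one (m i)
    _ = finrank ℝ E ^ n * ∫ x, ‖iteratedFDeriv ℝ n f x‖ ^ 2 := by simp

theorem sqrt_integral_norm_pow_mul_norm_fourier_sq_le (f : 𝓢(E, H)) (n : ℕ) :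
    √(∫ ξ, ‖ξ‖ ^ (2 * n) * ‖𝓕 f ξ‖ ^ 2) ≤
      (√(finrank ℝ E) / (2 * Real.pi)) ^ n * √(∫ x, ‖iteratedFDeriv ℝ n f x‖ ^ 2) := by
  have sq_coeff : ((√(finrank ℝ E) / (2 * Real.pi)) ^ n) ^ 2 =
      finrank ℝ E ^ n / (2 * Real.pi) ^ (2 * n) := by
    rw [pow_right_comm, div_pow, Real.sq_sqrt (by positivity), div_pow, ← pow_mul]
  refine Real.sqrt_le_iff.2 ⟨by positivity, ?_⟩
  rw [mul_pow, sq_coeff, Real.sq_sqrt (integral_nonneg fun x => by positivity), div_mul_eq_mul_div,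
    le_div_iff₀' (by positivity)]
  exact integral_norm_pow_mul_norm_fourier_sq_le f n

theorem norm_apply_le_mul_sqrt_integral_iteratedFDeriv_sq_rpow {j k : ℕ} {θ : ℝ}
    (hj : 2 * j < finrank ℝ E) (hk : finrank ℝ E < 2 * k)
    (hθ : (1 - θ) * j + θ * k = finrank ℝ E / 2) (f : 𝓢(E, H)) (x : E) :
    ‖f x‖ ≤ √(2 * ∫ ξ : E, (‖ξ‖ ^ (2 * j) + ‖ξ‖ ^ (2 * k))⁻¹) *
      (√(finrank ℝ E) / (2 * Real.pi)) ^ (finrank ℝ E / 2 : ℝ) *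
      (√(∫ y, ‖iteratedFDeriv ℝ j f y‖ ^ 2) ^ (1 - θ) *
        √(∫ y, ‖iteratedFDeriv ℝ k f y‖ ^ 2) ^ θ) := by
  have finrank_pos : 0 < finrank ℝ E := by omega
  have : Nontrivial E := nontrivial_of_finrank_pos finrank_pos
  obtain ⟨θ_pos, θ_lt_one⟩ : θ ∈ Ioo 0 1 :=
    mem_Ioo_of_one_sub_mul_add_mul_eq (a := 2 * j) (b := 2 * k) (c := finrank ℝ E) (mod_cast hj)
      (mod_cast hk) (by linarith)
  have : 0 ≤ 1 - θ := sub_nonneg.2 θ_lt_one.le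
  have carlson := carlson_inequality (μ := (volume : Measure E)) (f := (𝓕 f : 𝓢(E, H))) (θ := θ)
    (a := (2 * j : ℕ)) (b := (2 * k : ℕ)) (mod_cast hj) (mod_cast hk)
    (by simpa only [Real.rpow_natCast] using integrable_norm_pow_mul_norm_sq (𝓕 f) (2 * j))
    (by simpa only [Real.rpow_natCast] using integrable_norm_pow_mul_norm_sq (𝓕 f) (2 * k))
    (by push_cast; linarith)
  simp only [Real.rpow_natCast] at carlson
  set ρ := √(finrank ℝ E) / (2 * Real.pi)
  have ρ_pos : 0 < ρ := by positivity
  calc ‖f x‖ ≤ ∫ ξ, ‖𝓕 f ξ‖ := norm_apply_le_integral_norm_fourier f x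
    _ ≤ √(2 * ∫ ξ : E, (‖ξ‖ ^ (2 * j) + ‖ξ‖ ^ (2 * k))⁻¹) *
        (√(∫ ξ, ‖ξ‖ ^ (2 * j) * ‖𝓕 f ξ‖ ^ 2) ^ (1 - θ) *
          √(∫ ξ, ‖ξ‖ ^ (2 * k) * ‖𝓕 f ξ‖ ^ 2) ^ θ) := carlson
    _ ≤ √(2 * ∫ ξ : E, (‖ξ‖ ^ (2 * j) + ‖ξ‖ ^ (2 * k))⁻¹) *
        ((ρ ^ j * √(∫ y, ‖iteratedFDeriv ℝ j f y‖ ^ 2)) ^ (1 - θ) *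
          (ρ ^ k * √(∫ y, ‖iteratedFDeriv ℝ k f y‖ ^ 2)) ^ θ) := by
      gcongr <;> exact sqrt_integral_norm_pow_mul_norm_fourier_sq_le f _
    _ = _ := by
      rw [Real.mul_rpow (by positivity) (by positivity), Real.mul_rpow (by positivity)
        (by positivity), ← Real.rpow_natCast, ← Real.rpow_natCast, ← Real.rpow_mul ρ_pos.le,
        ← Real.rpow_mul ρ_pos.le, ← hθ, Real.rpow_add ρ_pos, mul_comm (1 - θ), mul_comm θ]
      ring

end GagliardoNirenberg

theorem integral_norm_iteratedFDeriv_postcompCLM_sq_le {E F G : Type*} [NormedAddCommGroup E]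
    [NormedSpace ℝ E] [SecondCountableTopology E] [MeasurableSpace E] [BorelSpace E]
    {μ : Measure E} [μ.HasTemperateGrowth] [NormedAddCommGroup F] [NormedSpace ℝ F]
    [NormedAddCommGroup G] [NormedSpace ℝ G] {L : F →L[ℝ] G} (hL : ‖L‖ ≤ 1) (f : 𝓢(E, F))
    (n : ℕ) :
    ∫ x, ‖iteratedFDeriv ℝ n (f.postcompCLM L) x‖ ^ 2 ∂μ ≤
      ∫ x, ‖iteratedFDeriv ℝ n f x‖ ^ 2 ∂μ := by
  refine integral_mono
    (by simpa using integrable_norm_pow_mul_norm_iteratedFDeriv_sq (f.postcompCLM L) 0 n)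
    (by simpa using integrable_norm_pow_mul_norm_iteratedFDeriv_sq f 0 n) fun x => ?_
  have norm_le : ‖iteratedFDeriv ℝ n (f.postcompCLM L) x‖ ≤ ‖iteratedFDeriv ℝ n f x‖ :=
    (L.norm_iteratedFDeriv_comp_left (f.smooth n).contDiffAt le_rfl).trans
      (mul_le_of_le_one_left (norm_nonneg _) hL)
  dsimp only
  gcongr

theorem exists_norm_le_one_and_norm_apply_eq {F : Type*} [NormedAddCommGroup F] [NormedSpace ℝ F]
    (v : F) : ∃ L : F →L[ℝ] ℂ, ‖L‖ ≤ 1 ∧ ‖L v‖ = ‖v‖ := by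
  obtain ⟨φ, φ_norm, φ_apply⟩ := exists_dual_vector'' ℝ v
  refine ⟨Complex.ofRealCLM ∘L φ, ?_, by simp [φ_apply]⟩
  simpa [Complex.ofRealCLM_norm] using (Complex.ofRealCLM.opNorm_comp_le φ).trans
    (mul_le_of_le_one_right (norm_nonneg _) φ_norm)

theorem stmt15_general {E F : Type*} [NormedAddCommGroup E] [InnerProductSpace ℝ E]
    [FiniteDimensional ℝ E] [MeasurableSpace E] [BorelSpace E] [NormedAddCommGroup F]
    [NormedSpace ℝ F] {j k : ℕ} {θ : ℝ} (hj : 2 * j < finrank ℝ E) (hk : finrank ℝ E < 2 * k)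
    (hθ : (1 - θ) * j + θ * k = finrank ℝ E / 2) :
    ∃ C > 0, ∀ u : 𝓢(E, F), ∀ x, ‖u x‖ ≤ C *
      √(∫ y, ‖iteratedFDeriv ℝ j u y‖ ^ 2) ^ (1 - θ) *
        √(∫ y, ‖iteratedFDeriv ℝ k u y‖ ^ 2) ^ θ := by
  let K := √(2 * ∫ ξ : E, (‖ξ‖ ^ (2 * j) + ‖ξ‖ ^ (2 * k))⁻¹) *
    (√(finrank ℝ E) / (2 * Real.pi)) ^ (finrank ℝ E / 2 : ℝ)
  have K_nonneg : 0 ≤ K := by positivity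
  refine ⟨K + 1, add_pos_of_nonneg_of_pos K_nonneg one_pos, fun u x => ?_⟩
  obtain ⟨θ_pos, θ_lt_one⟩ : θ ∈ Ioo 0 1 :=
    mem_Ioo_of_one_sub_mul_add_mul_eq (a := 2 * j) (b := 2 * k) (c := finrank ℝ E) (mod_cast hj)
      (mod_cast hk) (by linarith)
  have : 0 ≤ 1 - θ := sub_nonneg.2 θ_lt_one.le
  obtain ⟨L, L_norm, L_apply⟩ := exists_norm_le_one_and_norm_apply_eq (u x)
  calc ‖u x‖ = ‖u.postcompCLM L x‖ := L_apply.symm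
    _ ≤ K * (√(∫ y, ‖iteratedFDeriv ℝ j (u.postcompCLM L) y‖ ^ 2) ^ (1 - θ) *
        √(∫ y, ‖iteratedFDeriv ℝ k (u.postcompCLM L) y‖ ^ 2) ^ θ) :=
      norm_apply_le_mul_sqrt_integral_iteratedFDeriv_sq_rpow hj hk hθ (u.postcompCLM L) x
    _ ≤ (K + 1) * (√(∫ y, ‖iteratedFDeriv ℝ j u y‖ ^ 2) ^ (1 - θ) *
        √(∫ y, ‖iteratedFDeriv ℝ k u y‖ ^ 2) ^ θ) := by
      gcongr ?_ * (√?_ ^ _ * √?_ ^ _)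
      · linarith
      · exact integral_norm_iteratedFDeriv_postcompCLM_sq_le L_norm u j
      · exact integral_norm_iteratedFDeriv_postcompCLM_sq_le L_norm u k
    _ = _ := by ring

/-- Gagliardo–Nirenberg inequality `‖u‖_∞ ≤ C ‖Du‖_{L²}^{1/2} ‖D²u‖_{L²}^{1/2}` in `ℝ³`. -/
theorem stmt15 :
    ∃ C > (0:ℝ), ∀ u : SchwartzMap E3 ℝ, ∀ x : E3,
      ‖u x‖ ≤ C * (L2norm fun y => iteratedFDeriv ℝ 1 (⇑u) y) ^ ((1:ℝ)/2) *
        (L2norm fun y => iteratedFDeriv ℝ 2 (⇑u) y) ^ ((1:ℝ)/2) := by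
  simpa only [L2norm, Real.sqrt_eq_rpow, sub_half] using
    stmt15_general (E := E3) (F := ℝ) (j := 1) (k := 2) (θ := 1 / 2) (by simp)
      (by simp) (by norm_num)
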